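/- Let s be the posterior scoring rule. Then there exists a threshold τ ∈ ℝ such that PxAcc(s, τ) = 1 if and only if for all cues m₁, m₀ with pM(m₁) > 0, pM(m₀) > 0, T(m₁) = true and T(m₀) = false, one has s(m₀) < s(m₁). (Discrete, tie-free form of the paper's ill-posedness Lemma: when the true posterior p(Y|M) is used as the scoring rule, perfect pixel-wise localization accuracy at some threshold is achievable exactly when every positive-probability foreground cue has strictly larger posterior than every positive-probability background cue, i.e. the foreground–background posterior ratio exceeds 1.) -/

import Mathlib

open Finset

/-- Marginal probability of a cue `m` under the joint pmf `p` on `M × Bool`. -/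
noncomputable def pM {M : Type*} (p : M × Bool → ℝ) (m : M) : ℝ :=
  p (m, true) + p (m, false)

/-- Pixel-wise localization accuracy of scoring rule `s` at threshold `τ`. -/
noncomputable def pxAcc {M : Type*} [Fintype M] (p : M × Bool → ℝ) (T : M → Bool)
    (s : M → ℝ) (τ : ℝ) : ℝ :=
  ∑ m ∈ univ.filter (fun m => T m = true ∧ τ ≤ s m), pM p m
    + ∑ m ∈ univ.filter (fun m => T m = false ∧ s m < τ), pM p m

/-!
Each cue contributes its mass to the accuracy exactly when thresholding classifies it correctly, so
accuracy `1` means that no cue of positive mass is misclassified: `τ` separates the finitely many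
background scores from the finitely many foreground scores. Such a `τ` is the least foreground
score, or anything above all the scores when there is no foreground.
-/

theorem sum_filter_eq_sum_iff_of_nonneg {ι N : Type*} [AddCommMonoid N] [PartialOrder N]
    [IsOrderedCancelAddMonoid N] {A : Finset ι} {f : ι → N} (P : ι → Prop) [DecidablePred P]
    (hf : ∀ i ∈ A, 0 ≤ f i) :
    ∑ i ∈ A with P i, f i = ∑ i ∈ A, f i ↔ ∀ i ∈ A, 0 < f i → P i := by
  have ite_le : ∀ i ∈ A, (if P i then f i else 0) ≤ f i := fun i hi => by
    split_ifs
    exacts [le_rfl, hf i hi]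
  rw [sum_filter, sum_eq_sum_iff_of_le ite_le]
  refine forall₂_congr fun i hi => ?_
  by_cases hP : P i
  · simp only [hP, if_true, implies_true]
  · simp only [hP, if_false, imp_false, (hf i hi).lt_iff_ne, not_not]

theorem exists_threshold_iff {ι α : Type*} [LinearOrder α] [NoMaxOrder α] [Nonempty α]
    (A : Finset ι) (P : ι → Prop) (f : ι → α) :
    (∃ τ, ∀ i ∈ A, (P i ↔ τ ≤ f i)) ↔ ∀ i ∈ A, ∀ j ∈ A, P i → ¬P j → f j < f i := by
  classical
  constructor
  · rintro ⟨τ, hτ⟩ i hi j hj hPi hPj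
    have le_fi : τ ≤ f i := (hτ i hi).mp hPi
    have fj_lt : f j < τ := not_le.mp (mt (hτ j hj).mpr hPj)
    exact fj_lt.trans_le le_fi
  · intro separated
    rcases {i ∈ A | P i}.eq_empty_or_nonempty with no_P | some_P
    · obtain ⟨b, hb⟩ := (A.image f).bddAbove
      obtain ⟨τ, hτ⟩ := exists_gt b
      have f_lt : ∀ i ∈ A, f i < τ := fun i hi => (hb (mem_image_of_mem f hi)).trans_lt hτ
      exact ⟨τ, fun i hi => iff_of_false (filter_eq_empty_iff.mp no_P hi) (f_lt i hi).not_ge⟩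
    · obtain ⟨i₀, hi₀, f_min⟩ := exists_min_image _ f some_P
      obtain ⟨hi₀A, hPi₀⟩ := mem_filter.mp hi₀
      refine ⟨f i₀, fun j hj => ⟨fun hPj => f_min j (mem_filter.mpr ⟨hj, hPj⟩), fun le => ?_⟩⟩
      by_contra hPj
      exact (separated i₀ hi₀A j hj hPi₀ hPj).not_ge le

section Accuracy

variable {M : Type*} {p : M × Bool → ℝ}

theorem pM_nonneg (hp : ∀ x, 0 ≤ p x) (m : M) : 0 ≤ pM p m :=
  add_nonneg (hp _) (hp _)

variable [Fintype M]

theorem sum_pM (p : M × Bool → ℝ) : ∑ m, pM p m = ∑ x, p x := by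
  simp only [pM, Fintype.sum_prod_type, Fintype.sum_bool]

theorem pxAcc_eq_sum_filter (p : M × Bool → ℝ) (T : M → Bool) (s : M → ℝ) (τ : ℝ) :
    pxAcc p T s τ = ∑ m with (T m = true ↔ τ ≤ s m), pM p m := by
  rw [pxAcc, sum_filter, sum_filter, sum_filter, ← sum_add_distrib]
  refine sum_congr rfl fun m _ => ?_
  cases T m <;> simp

theorem pxAcc_eq_one_iff (hp : ∀ x, 0 ≤ p x) (hsum : ∑ x, p x = 1)
    (T : M → Bool) (s : M → ℝ) (τ : ℝ) :
    pxAcc p T s τ = 1 ↔ ∀ m, 0 < pM p m → (T m = true ↔ τ ≤ s m) := by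
  rw [pxAcc_eq_sum_filter, ← hsum, ← sum_pM,
    sum_filter_eq_sum_iff_of_nonneg _ fun m _ => pM_nonneg hp m]
  simp only [mem_univ, forall_true_left]

theorem posterior_perfect_accuracy_iff_general (hp : ∀ x, 0 ≤ p x) (hsum : ∑ x, p x = 1)
    (T : M → Bool) (s : M → ℝ) :
    (∃ τ : ℝ, pxAcc p T s τ = 1) ↔
      ∀ m₁ m₀ : M, 0 < pM p m₁ → 0 < pM p m₀ → T m₁ = true → T m₀ = false →
        s m₀ < s m₁ := by
  simp only [pxAcc_eq_one_iff hp hsum]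
  have threshold_iff := exists_threshold_iff ({m | 0 < pM p m} : Finset M) (T · = true) s
  simp only [mem_filter_univ, Bool.not_eq_true] at threshold_iff
  rw [threshold_iff]
  exact ⟨fun h m₁ m₀ pos₁ pos₀ => h m₁ pos₁ m₀ pos₀,
    fun h m₁ pos₁ m₀ pos₀ => h m₁ m₀ pos₁ pos₀⟩

end Accuracy

/-- Ill-posedness lemma (discrete, tie-free form): with the posterior scoring rule,
perfect pixel-wise accuracy at some threshold is achievable iff every
positive-probability foreground cue strictly out-scores every positive-probability
background cue. -/
theorem posterior_perfect_accuracy_iff {M : Type*} [Fintype M] [Nonempty M]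
    (p : M × Bool → ℝ) (hp : ∀ x, 0 ≤ p x) (hsum : ∑ x, p x = 1)
    (T : M → Bool) (s : M → ℝ)
    (hs : ∀ m, s m = if 0 < pM p m then p (m, true) / pM p m else 0) :
    (∃ τ : ℝ, pxAcc p T s τ = 1) ↔
      ∀ m₁ m₀ : M, 0 < pM p m₁ → 0 < pM p m₀ → T m₁ = true → T m₀ = false →
        s m₀ < s m₁ :=
  posterior_perfect_accuracy_iff_general hp hsum T s
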